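/- For R > 0 let Q_R = {z ∈ ℂ : 0 < Re z < 2R and −R < Im z < R}. Let φ : ℂ → ℂ be holomorphic and injective on the right half-plane ℍ = {z ∈ ℂ : Re z > 0}, let H > 0 and 0 < α ≤ 1, and suppose that for every T ≥ 1 one has |φ(T·w₁) − φ(T·w₂)| ≤ H·T·|φ′(T)|·|w₁ − w₂|^α for all w₁, w₂ ∈ Q₁. Let R ≥ e and let a₀ = log R + i·y with y ≥ 0 be a point with |φ(a₀)| = R. Then R ≤ |φ(1)| + 32H·|φ′(1)|·(max(log R, y))². -/

import Mathlib

open Complex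

/-- The half-open square `Q_R = {0 < Re z < 2R, -R < Im z < R}`. -/
def Qsq (R : ℝ) : Set ℂ :=
  {z : ℂ | 0 < z.re ∧ z.re < 2 * R ∧ -R < z.im ∧ z.im < R}


/-- real-linear map `w ↦ a w + c conj w` -/
noncomputable def abL (a c : ℂ) : ℂ →L[ℝ] ℂ :=
  a • (1 : ℂ →L[ℝ] ℂ) + c • (Complex.conjCLE : ℂ →L[ℝ] ℂ)

lemma abL_apply (a c w : ℂ) : abL a c w = a * w + c * (starRingEnd ℂ) w := by
  simp [abL]

lemma abL_det (a c : ℂ) : (abL a c).det = ‖a‖ ^ 2 - ‖c‖ ^ 2 := by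
  have h : (abL a c).det = LinearMap.det ((abL a c : ℂ →L[ℝ] ℂ) : ℂ →ₗ[ℝ] ℂ) := rfl
  rw [h, ← LinearMap.det_toMatrix Complex.basisOneI, Matrix.det_fin_two]
  simp only [LinearMap.toMatrix_apply, ContinuousLinearMap.coe_coe, abL_apply]
  simp [Complex.sq_norm, Complex.normSq_apply]
  ring

lemma polar_annulus (f : ℂ → ℝ) (c : ℝ → ℝ) (ρ r : ℝ) (hρ : 0 < ρ) (hr : ρ ≤ r)
    (hf : ContinuousOn f {z : ℂ | ρ ≤ ‖z‖ ∧ ‖z‖ ≤ r})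
    (hc : ∀ s ∈ Set.Icc ρ r, Real.circleAverage f 0 s = c s) :
    ∫ z in {z : ℂ | ρ ≤ ‖z‖ ∧ ‖z‖ ≤ r}, f z = ∫ s in ρ..r, 2 * Real.pi * (s * c s) := by
  set A := {z : ℂ | ρ ≤ ‖z‖ ∧ ‖z‖ ≤ r} with hA
  have hAm : MeasurableSet A := by
    apply IsClosed.measurableSet
    exact (isClosed_le continuous_const continuous_norm).inter
      (isClosed_le continuous_norm continuous_const)
  have hcm : ∀ p : ℝ × ℝ, Complex.polarCoord.symm p = circleMap 0 p.1 p.2 := by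
    intro p
    simp [circleMap, Complex.exp_mul_I]
  rw [← MeasureTheory.integral_indicator hAm, ← Complex.integral_comp_polarCoord_symm]
  have h1 : ∀ p ∈ polarCoord.target, p.1 • A.indicator f (Complex.polarCoord.symm p)
      = (Set.Icc ρ r ×ˢ Set.univ).indicator
        (fun p : ℝ × ℝ => p.1 * f (circleMap 0 p.1 p.2)) p := by
    intro p hp
    have hp1 : 0 < p.1 := hp.1
    have : Complex.polarCoord.symm p ∈ A ↔ p ∈ Set.Icc ρ r ×ˢ (Set.univ : Set ℝ) := by
      rw [hA, Set.mem_ofPred_eq, Complex.norm_polarCoord_symm, abs_of_pos hp1]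
      simp [Set.mem_prod]
    by_cases h : p ∈ Set.Icc ρ r ×ˢ (Set.univ : Set ℝ)
    · rw [Set.indicator_of_mem h, Set.indicator_of_mem (this.2 h), hcm, smul_eq_mul]
    · rw [Set.indicator_of_notMem h, Set.indicator_of_notMem (fun h' => h (this.1 h')), smul_zero]
  rw [MeasureTheory.setIntegral_congr_fun polarCoord.open_target.measurableSet h1,
    MeasureTheory.setIntegral_indicator (measurableSet_Icc.prod MeasurableSet.univ)]
  have h2 : polarCoord.target ∩ Set.Icc ρ r ×ˢ Set.univ
      = Set.Icc ρ r ×ˢ Set.Ioo (-Real.pi) Real.pi := by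
    ext p
    simp only [polarCoord_target, Set.mem_inter_iff, Set.mem_prod, Set.mem_Ioi, Set.mem_Icc,
      Set.mem_univ, and_true]
    constructor
    · rintro ⟨⟨a, b⟩, c⟩; exact ⟨c, b⟩
    · rintro ⟨c, b⟩; exact ⟨⟨lt_of_lt_of_le hρ c.1, b⟩, c⟩
  rw [h2, MeasureTheory.Measure.volume_eq_prod, MeasureTheory.setIntegral_prod]
  · rw [intervalIntegral.integral_of_le hr, ← MeasureTheory.integral_Icc_eq_integral_Ioc]
    apply MeasureTheory.setIntegral_congr_fun measurableSet_Icc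
    intro s hs
    have := hc s hs
    rw [Real.circleAverage_def] at this
    simp only
    rw [MeasureTheory.integral_const_mul, ← MeasureTheory.integral_Ioc_eq_integral_Ioo,
      ← intervalIntegral.integral_of_le (by linarith [Real.pi_pos]), ← this]
    have hper : Function.Periodic (fun θ => f (circleMap 0 s θ)) (2 * Real.pi) := by
      intro θ; simp only [periodic_circleMap 0 s θ]
    have := hper.intervalIntegral_add_eq (-Real.pi) 0
    rw [show -Real.pi + 2 * Real.pi = Real.pi by ring, zero_add] at this
    rw [this, smul_eq_mul]
    field_simp
  · apply MeasureTheory.IntegrableOn.mono_set (t := Set.Icc ρ r ×ˢ Set.Icc (-Real.pi) Real.pi)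
    · apply ContinuousOn.integrableOn_compact (isCompact_Icc.prod isCompact_Icc)
      apply continuous_fst.continuousOn.mul
      apply hf.comp
      · unfold circleMap; fun_prop
      · rintro p ⟨hp, _⟩
        simp only [hA, Set.mem_ofPred_eq, norm_circleMap_zero, abs_of_pos (lt_of_lt_of_le hρ hp.1)]
        exact hp
    · exact Set.prod_mono le_rfl Set.Ioo_subset_Icc_self

lemma area_pointwise (z h b : ℂ) (hz : z ≠ 0) :
    1 / ‖z‖ ^ 4 - 2 * (h * z ^ 2).re / ‖z‖ ^ 4 + 2 * (h * (starRingEnd ℂ) b).re - ‖b‖ ^ 2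
      ≤ ‖-(z ^ 2)⁻¹ + h‖ ^ 2 := by
  have hn : ‖z‖ ≠ 0 := by simpa using hz
  have e1 : ‖-(z ^ 2)⁻¹ + h‖ ^ 2
      = 1 / ‖z‖ ^ 4 - 2 * (h * z ^ 2).re / ‖z‖ ^ 4 + ‖h‖ ^ 2 := by
    rw [← Complex.normSq_eq_norm_sq (-(z ^ 2)⁻¹ + h), Complex.normSq_add,
      Complex.normSq_eq_norm_sq, Complex.normSq_eq_norm_sq]
    have : (-(z ^ 2)⁻¹ * (starRingEnd ℂ) h).re = - (h * z ^ 2).re / ‖z‖ ^ 4 := by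
      rw [Complex.inv_def, Complex.normSq_eq_norm_sq, norm_pow, ← pow_mul]
      have : -((starRingEnd ℂ) (z ^ 2) * (((‖z‖ ^ (2 * 2))⁻¹ : ℝ) : ℂ)) * (starRingEnd ℂ) h
        = (((-(‖z‖ ^ (2 * 2))⁻¹ : ℝ)) : ℂ) * (starRingEnd ℂ) (h * z ^ 2) := by
        push_cast; rw [map_mul]; ring
      rw [this, Complex.re_ofReal_mul, Complex.conj_re]
      ring
    rw [this, norm_neg, norm_inv, norm_pow]
    field_simp
    ring
  have e2 : 0 ≤ ‖h - b‖ ^ 2 := by positivity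
  rw [← Complex.normSq_eq_norm_sq, Complex.normSq_sub, Complex.normSq_eq_norm_sq,
    Complex.normSq_eq_norm_sq] at e2
  rw [e1]
  linarith

lemma re_circleAverage (N : ℂ → ℂ) (s : ℝ) (hs : 0 < s) (hs1 : s < 1)
    (hN : DifferentiableOn ℂ N (Metric.ball 0 1)) :
    Real.circleAverage (fun z => (N z).re) 0 s = (N 0).re := by
  have hd : DiffContOnCl ℂ N (Metric.ball 0 |s|) := by
    apply DifferentiableOn.diffContOnCl
    apply hN.mono
    rw [closure_ball _ (by simpa using hs.ne'), abs_of_pos hs]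
    exact Metric.closedBall_subset_ball hs1
  have h1 := hd.circleAverage
  rw [← h1, Real.circleAverage_def, Real.circleAverage_def, Complex.smul_re]
  congr 1
  have hi : IntervalIntegrable (fun θ => N (circleMap 0 s θ)) MeasureTheory.volume 0 (2 * Real.pi) := by
    apply Continuous.intervalIntegrable
    apply hN.continuousOn.comp_continuous (continuous_circleMap 0 s)
    intro θ
    simpa [abs_of_pos hs] using hs1
  exact Complex.reCLM.intervalIntegral_comp_comm hi

lemma area_integral (h : ℂ → ℂ) (hh : DifferentiableOn ℂ h (Metric.ball 0 1))
    (ρ r : ℝ) (hρ : 0 < ρ) (hr : ρ ≤ r) (hr1 : r < 1) :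
    Real.pi * (1 / ρ ^ 2 - 1 / r ^ 2 + ‖h 0‖ ^ 2 * (r ^ 2 - ρ ^ 2)) ≤
      ∫ z in {z : ℂ | ρ ≤ ‖z‖ ∧ ‖z‖ ≤ r}, ‖-(z ^ 2)⁻¹ + h z‖ ^ 2 := by
  set A := {z : ℂ | ρ ≤ ‖z‖ ∧ ‖z‖ ≤ r} with hA
  set b := h 0 with hb
  have hAc : IsCompact A := by
    apply IsCompact.of_isClosed_subset (isCompact_closedBall (0 : ℂ) r)
    · exact (isClosed_le continuous_const continuous_norm).inter
        (isClosed_le continuous_norm continuous_const)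
    · intro z hz; simpa using hz.2
  have hA0 : ∀ z ∈ A, z ≠ 0 := by
    rintro z ⟨h1, _⟩ rfl
    simp at h1; linarith
  have hA0' : ∀ z ∈ A, ‖z‖ ≠ 0 := fun z hz => by simpa using hA0 z hz
  have hAb : A ⊆ Metric.ball 0 1 := by
    rintro z ⟨_, h2⟩
    simpa using lt_of_le_of_lt h2 hr1
  have hhc : ContinuousOn h A := hh.continuousOn.mono hAb
  set low : ℂ → ℝ := fun z => 1 / ‖z‖ ^ 4 - 2 * (h z * z ^ 2).re / ‖z‖ ^ 4
    + 2 * (h z * (starRingEnd ℂ) b).re - ‖b‖ ^ 2 with hlow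
  have hlc : ContinuousOn low A := by
    have c1 : ContinuousOn (fun z => (h z * z ^ 2).re) A :=
      Complex.continuous_re.comp_continuousOn (hhc.mul (by fun_prop))
    have c2 : ContinuousOn (fun z => (h z * (starRingEnd ℂ) b).re) A :=
      Complex.continuous_re.comp_continuousOn (hhc.mul (by fun_prop))
    have c3 : ContinuousOn (fun z : ℂ => ‖z‖ ^ 4) A := by fun_prop
    have c4 : ∀ z ∈ A, ‖z‖ ^ 4 ≠ 0 := fun z hz => pow_ne_zero _ (hA0' z hz)
    exact (((continuousOn_const.div c3 c4).sub ((continuousOn_const.mul c1).div c3 c4)).add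
      (continuousOn_const.mul c2)).sub continuousOn_const
  have hgc : ContinuousOn (fun z => ‖-(z ^ 2)⁻¹ + h z‖ ^ 2) A := by
    apply ContinuousOn.pow
    apply ContinuousOn.norm
    apply ContinuousOn.add _ hhc
    apply ContinuousOn.neg
    apply ContinuousOn.inv₀ (by fun_prop)
    intro z hz
    exact pow_ne_zero _ (hA0 z hz)
  have havg : ∀ s ∈ Set.Icc ρ r, Real.circleAverage low 0 s = 1 / s ^ 4 + ‖b‖ ^ 2 := by
    intro s hs
    have hs0 : 0 < s := lt_of_lt_of_le hρ hs.1
    have hs1 : s < 1 := lt_of_le_of_lt hs.2 hr1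
    set N : ℂ → ℂ := fun z => ((1 / s ^ 4 : ℝ) : ℂ) - ((2 / s ^ 4 : ℝ) : ℂ) * (h z * z ^ 2)
      + ((2 : ℝ) : ℂ) * (h z * (starRingEnd ℂ) b) - ((‖b‖ ^ 2 : ℝ) : ℂ) with hN
    have hNd : DifferentiableOn ℂ N (Metric.ball 0 1) := by
      rw [hN]; fun_prop
    have := re_circleAverage N s hs0 hs1 hNd
    have h0 : (N 0).re = 1 / s ^ 4 + ‖b‖ ^ 2 := by
      simp only [hN, ← hb]
      rw [Complex.mul_conj, Complex.normSq_eq_norm_sq]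
      simp only [Complex.sub_re, Complex.add_re, Complex.ofReal_re, Complex.re_ofReal_mul]
      simp
      ring
    rw [← h0, ← this]
    apply Real.circleAverage_congr_sphere
    intro z hz
    have hz' : ‖z‖ = s := by simpa [abs_of_pos hs0] using hz
    simp only [hlow, hN, hz', Complex.sub_re, Complex.add_re, Complex.ofReal_re,
      Complex.re_ofReal_mul]
    ring
  have key := polar_annulus low (fun s => 1 / s ^ 4 + ‖b‖ ^ 2) ρ r hρ hr hlc havg
  have hle : ∫ z in A, low z ≤ ∫ z in A, ‖-(z ^ 2)⁻¹ + h z‖ ^ 2 := by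
    apply MeasureTheory.setIntegral_mono_on (hlc.integrableOn_compact hAc)
      (hgc.integrableOn_compact hAc) hAc.measurableSet
    intro z hz
    exact area_pointwise z (h z) b (hA0 z hz)
  refine le_trans (le_of_eq ?_) hle
  rw [key]
  have hd : ∀ s ∈ Set.uIcc ρ r, HasDerivAt (fun s : ℝ => Real.pi * (-(s ^ 2)⁻¹ + ‖b‖ ^ 2 * s ^ 2))
      (2 * Real.pi * (s * (1 / s ^ 4 + ‖b‖ ^ 2))) s := by
    intro s hs
    rw [Set.uIcc_of_le hr] at hs
    have hs0 : s ≠ 0 := (lt_of_lt_of_le hρ hs.1).ne'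
    have h1 := (((hasDerivAt_pow 2 s).inv (pow_ne_zero 2 hs0)).neg.add
      ((hasDerivAt_pow 2 s).const_mul (‖b‖ ^ 2))).const_mul Real.pi
    convert! h1 using 1
    field_simp
    simp
  rw [intervalIntegral.integral_eq_sub_of_hasDerivAt hd]
  · ring
  · apply ContinuousOn.intervalIntegrable
    rw [Set.uIcc_of_le hr]
    have : ∀ s ∈ Set.Icc ρ r, s ^ 4 ≠ 0 := fun s hs =>
      pow_ne_zero _ (lt_of_lt_of_le hρ hs.1).ne'
    fun_prop (disch := assumption)

lemma image_bound (b E z : ℂ) (C ρ : ℝ) (hC : 0 ≤ C) (hρ : 0 < ρ) (hρz : ρ ≤ ‖z‖) (hz1 : ‖z‖ ≤ 1)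
    (hE : ‖E‖ ≤ C * ‖z‖ ^ 2)
    (h1 : ρ * (2 * (‖b‖ + C + ‖b‖ ^ 2 + ‖b‖ * C)) ≤ 1) (h2 : 3 * ‖b‖ * ρ ^ 2 ≤ 1) :
    ‖abL 1 (-(b * (ρ : ℂ) ^ 2)) (z⁻¹ + (b * z + E))‖
      ≤ 1 / ρ + (4 * C + 2 * ‖b‖ ^ 2 + 4 * ‖b‖ * C) * ρ ^ 2 := by
  have hs : 0 < ‖z‖ := lt_of_lt_of_le hρ hρz
  have hz : z ≠ 0 := by simpa using hs
  have hconj : (starRingEnd ℂ) z ≠ 0 := by simpa using hz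
  set s := ‖z‖ with hsdef
  have hzz : z * (starRingEnd ℂ) z = ((s ^ 2 : ℝ) : ℂ) := by
    rw [Complex.mul_conj, Complex.normSq_eq_norm_sq]
  have hci : ((starRingEnd ℂ) z)⁻¹ = z * (((s ^ 2)⁻¹ : ℝ) : ℂ) := by
    rw [inv_eq_iff_eq_inv, mul_inv, ← Complex.ofReal_inv, inv_inv, ← hzz]
    field_simp
  have hdec : abL 1 (-(b * (ρ : ℂ) ^ 2)) (z⁻¹ + (b * z + E))
      = z⁻¹ + b * (z * ((1 - ρ ^ 2 * (s ^ 2)⁻¹ : ℝ) : ℂ)) + E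
        + (-(b * (starRingEnd ℂ) b * (ρ : ℂ) ^ 2 * (starRingEnd ℂ) z))
        + (-(b * (ρ : ℂ) ^ 2 * (starRingEnd ℂ) E)) := by
    rw [abL_apply, map_add, map_add, map_mul, map_inv₀, hci]
    push_cast
    ring
  have hq : 0 ≤ 1 - ρ ^ 2 * (s ^ 2)⁻¹ := by
    have : ρ ^ 2 * (s ^ 2)⁻¹ ≤ 1 := by
      rw [← div_eq_mul_inv, div_le_one (by positivity)]
      gcongr
    linarith
  have hn : ‖abL 1 (-(b * (ρ : ℂ) ^ 2)) (z⁻¹ + (b * z + E))‖ ≤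
      1 / s + ‖b‖ * (s * (1 - ρ ^ 2 * (s ^ 2)⁻¹)) + C * s ^ 2 + ‖b‖ ^ 2 * ρ ^ 2 * s
        + ‖b‖ * ρ ^ 2 * (C * s ^ 2) := by
    rw [hdec]
    refine (norm_add_le _ _).trans (add_le_add ((norm_add_le _ _).trans (add_le_add
      ((norm_add_le _ _).trans (add_le_add ((norm_add_le _ _).trans (add_le_add ?_ ?_)) hE)) ?_)) ?_)
    · rw [norm_inv, one_div]
    · rw [norm_mul, norm_mul, Complex.norm_real, Real.norm_of_nonneg hq]
    · rw [norm_neg, norm_mul, norm_mul, norm_mul, norm_pow, Complex.norm_real,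
        Real.norm_of_nonneg hρ.le, RCLike.norm_conj, RCLike.norm_conj]
      apply le_of_eq; ring
    · rw [norm_neg, norm_mul, norm_mul, norm_pow, Complex.norm_real,
        Real.norm_of_nonneg hρ.le, RCLike.norm_conj]
      gcongr
  refine hn.trans ?_
  have hb := norm_nonneg b
  set β := ‖b‖
  have hρ1 : ρ ≤ 1 := hρz.trans hz1
  have hq2 : s * (1 - ρ ^ 2 * (s ^ 2)⁻¹) = (s - ρ) * (s + ρ) / s := by
    field_simp
    ring
  by_cases hcase : s ≤ 2 * ρ
  · have t1 : 1 / s + β * (s * (1 - ρ ^ 2 * (s ^ 2)⁻¹)) ≤ 1 / ρ := by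
      rw [hq2]
      have : 1 / ρ - 1 / s - β * ((s - ρ) * (s + ρ) / s)
          = (s - ρ) / (s * ρ) * (1 - β * (s + ρ) * ρ) := by
        field_simp
      have t : β * (s + ρ) * ρ ≤ 1 := by
        calc β * (s + ρ) * ρ ≤ β * (2 * ρ + ρ) * ρ := by gcongr
          _ = 3 * β * ρ ^ 2 := by ring
          _ ≤ 1 := h2
      have : 0 ≤ (s - ρ) / (s * ρ) * (1 - β * (s + ρ) * ρ) := by
        apply mul_nonneg
        · apply div_nonneg <;> [linarith; positivity]
        · linarith
      linarith
    have t2 : C * s ^ 2 ≤ 4 * C * ρ ^ 2 := by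
      calc C * s ^ 2 ≤ C * (2 * ρ) ^ 2 := by gcongr
        _ = _ := by ring
    have t3 : β ^ 2 * ρ ^ 2 * s ≤ 2 * β ^ 2 * ρ ^ 2 := by
      have : 0 ≤ β ^ 2 * ρ ^ 2 := by positivity
      nlinarith
    have t4 : β * ρ ^ 2 * (C * s ^ 2) ≤ 4 * β * C * ρ ^ 2 := by
      have : C * s ^ 2 ≤ C * 1 := by gcongr; nlinarith
      have h5 : 0 ≤ β * ρ ^ 2 := by positivity
      have h6 : 0 ≤ β * ρ ^ 2 * C := by positivity
      nlinarith
    nlinarith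
  · push Not at hcase
    have t1 : 1 / s ≤ 1 / (2 * ρ) := by gcongr
    have t2 : β * (s * (1 - ρ ^ 2 * (s ^ 2)⁻¹)) ≤ β := by
      have h5 : 0 ≤ ρ ^ 2 * (s ^ 2)⁻¹ := by positivity
      have : s * (1 - ρ ^ 2 * (s ^ 2)⁻¹) ≤ 1 * 1 := by
        gcongr; linarith
      nlinarith
    have hs2 : s ^ 2 ≤ 1 := by nlinarith
    have hr2 : ρ ^ 2 ≤ 1 := by nlinarith
    have t3 : C * s ^ 2 ≤ C := by nlinarith
    have t4 : β ^ 2 * ρ ^ 2 * s ≤ β ^ 2 * 1 * 1 := by gcongr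
    have t5 : β * ρ ^ 2 * (C * s ^ 2) ≤ β * 1 * (C * 1) := by gcongr
    have t6 : β + C + β ^ 2 + β * C ≤ 1 / (2 * ρ) := by
      rw [le_div_iff₀ (by positivity)]
      linarith
    have t7 : 1 / (2 * ρ) + 1 / (2 * ρ) = 1 / ρ := by field_simp; norm_num
    have t8 : 0 ≤ (4 * C + 2 * β ^ 2 + 4 * β * C) * ρ ^ 2 := by positivity
    linarith

lemma area_ineq (e : ℂ → ℂ) (he : DifferentiableOn ℂ e (Metric.ball 0 1))
    (hinj : Set.InjOn (fun z => z⁻¹ + e z) (Metric.ball 0 1 \ {0}))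
    (ρ r P : ℝ) (hρ : 0 < ρ) (hr : ρ ≤ r) (hr1 : r < 1) (c : ℂ) (hc : ‖c‖ ≤ 1) (hP : 0 ≤ P)
    (him : ∀ z : ℂ, ρ ≤ ‖z‖ → ‖z‖ ≤ r → ‖abL 1 c (z⁻¹ + e z)‖ ≤ P) :
    (1 - ‖c‖ ^ 2) * (1 / ρ ^ 2 - 1 / r ^ 2 + ‖deriv e 0‖ ^ 2 * (r ^ 2 - ρ ^ 2)) ≤ P ^ 2 := by
  have hde : DifferentiableOn ℂ (deriv e) (Metric.ball 0 1) := he.deriv Metric.isOpen_ball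
  have hI := area_integral (deriv e) hde ρ r hρ hr hr1
  set A := {z : ℂ | ρ ≤ ‖z‖ ∧ ‖z‖ ≤ r} with hA
  have hAc : IsClosed A := (isClosed_le continuous_const continuous_norm).inter
        (isClosed_le continuous_norm continuous_const)
  have hA0 : ∀ z ∈ A, z ≠ 0 := by
    rintro z ⟨h1, _⟩ rfl
    simp at h1; linarith
  have hAb : A ⊆ Metric.ball 0 1 := by
    rintro z ⟨_, h2⟩
    simpa using lt_of_le_of_lt h2 hr1
  set g : ℂ → ℂ := fun z => z⁻¹ + e z with hg
  have hgd : ∀ z ∈ A, HasFDerivWithinAt g (abL (-(z ^ 2)⁻¹ + deriv e z) 0) A z := by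
    intro z hz
    have h1 : HasDerivAt g (-(z ^ 2)⁻¹ + deriv e z) z :=
      (hasDerivAt_inv (hA0 z hz)).add
        (he.differentiableAt (Metric.isOpen_ball.mem_nhds (hAb hz))).hasDerivAt
    have h2 := h1.complexToReal_fderiv.hasFDerivWithinAt (s := A)
    convert! h2 using 1
    simp [abL]
  have hginj : Set.InjOn g A := hinj.mono (fun z hz => Set.mem_sdiff_singleton.2 ⟨hAb hz, hA0 z hz⟩)
  have hvol := MeasureTheory.lintegral_abs_det_fderiv_eq_addHaar_image MeasureTheory.volume
    hAc.measurableSet hgd hginj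
  have hle : ENNReal.ofReal (∫ z in A, ‖-(z ^ 2)⁻¹ + deriv e z‖ ^ 2)
      ≤ MeasureTheory.volume (g '' A) := by
    rw [← hvol]
    have hdet : ∀ x : ℂ, |(abL (-(x ^ 2)⁻¹ + deriv e x) 0).det| = ‖-(x ^ 2)⁻¹ + deriv e x‖ ^ 2 := by
      intro x
      rw [abL_det, norm_zero, zero_pow two_ne_zero, sub_zero, abs_of_nonneg (by positivity)]
    simp_rw [hdet]
    by_cases hint : MeasureTheory.IntegrableOn (fun z => ‖-(z ^ 2)⁻¹ + deriv e z‖ ^ 2) A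
    · rw [MeasureTheory.ofReal_integral_eq_lintegral_ofReal hint]
      exact Filter.Eventually.of_forall fun z => by positivity
    · rw [MeasureTheory.integral_undef hint]
      simp
  have hL := MeasureTheory.Measure.addHaar_image_continuousLinearMap
    (MeasureTheory.volume : MeasureTheory.Measure ℂ) (abL 1 c) (g '' A)
  have hsub : (abL 1 c) '' (g '' A) ⊆ Metric.closedBall 0 P := by
    rintro _ ⟨_, ⟨z, hz, rfl⟩, rfl⟩
    rw [mem_closedBall_zero_iff]
    exact him z hz.1 hz.2
  have hm := MeasureTheory.measure_mono (μ := MeasureTheory.volume) hsub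
  rw [hL, Complex.volume_closedBall] at hm
  change ENNReal.ofReal |(abL 1 c).det| * _ ≤ _ at hm
  rw [abL_det] at hm
  have h1c : 0 ≤ 1 - ‖c‖ ^ 2 := by nlinarith [norm_nonneg c]
  have hm2 := (mul_le_mul_right hle (ENNReal.ofReal |‖(1:ℂ)‖ ^ 2 - ‖c‖ ^ 2|)).trans hm
  rw [norm_one, one_pow, abs_of_nonneg h1c, ← ENNReal.ofReal_mul h1c, ← ENNReal.ofReal_pow hP] at hm2
  have : ENNReal.ofReal (P ^ 2) * (NNReal.pi : ENNReal) = ENNReal.ofReal (P ^ 2 * Real.pi) := by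
    rw [ENNReal.ofReal_mul (by positivity)]
    congr 1
    rw [ENNReal.ofReal, ← NNReal.coe_real_pi, Real.toNNReal_coe]
  rw [this, ENNReal.ofReal_le_ofReal_iff (by positivity)] at hm2
  have := (mul_le_mul_of_nonneg_left hI h1c).trans hm2
  have hpi := Real.pi_pos
  rw [mul_left_comm, mul_comm _ Real.pi] at this
  exact le_of_mul_le_mul_left this hpi

lemma area_theorem (e : ℂ → ℂ) (he : DifferentiableOn ℂ e (Metric.ball 0 1)) (he0 : e 0 = 0)
    (hinj : Set.InjOn (fun z => z⁻¹ + e z) (Metric.ball 0 1 \ {0})) :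
    ‖deriv e 0‖ ≤ 1 := by
  set b := deriv e 0 with hb
  have h0 : (0 : ℂ) ∈ Metric.ball (0 : ℂ) 1 := by simp
  have hn : Metric.ball (0 : ℂ) 1 ∈ nhds (0 : ℂ) := Metric.isOpen_ball.mem_nhds h0
  -- second order remainder
  set d1 := dslope e 0 with hd1
  set d2 := dslope d1 0 with hd2
  have hd1d : DifferentiableOn ℂ d1 (Metric.ball 0 1) := (Complex.differentiableOn_dslope hn).2 he
  have hd2d : DifferentiableOn ℂ d2 (Metric.ball 0 1) := (Complex.differentiableOn_dslope hn).2 hd1d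
  have hexp : ∀ z, e z = b * z + z ^ 2 * d2 z := by
    intro z
    have e1 := sub_smul_dslope e 0 z
    have e2 := sub_smul_dslope d1 0 z
    rw [← hd1, he0] at e1
    rw [← hd2, hd1, dslope_same, ← hb, ← hd1] at e2
    simp only [sub_zero, smul_eq_mul] at e1 e2
    rw [← e1, pow_two, mul_assoc, e2]
    ring
  have hr : ∀ r : ℝ, 0 < r → r < 1 → ‖b‖ ^ 2 * r ^ 2 ≤ 1 / r ^ 2 := by
    intro r hr0 hr1
    obtain ⟨C, hC⟩ := (isCompact_closedBall (0 : ℂ) r).exists_bound_of_continuousOn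
      (hd2d.continuousOn.mono (Metric.closedBall_subset_ball hr1))
    have hC0 : 0 ≤ C := (norm_nonneg _).trans (hC 0 (by simpa using hr0.le))
    set C' := 4 * C + 2 * ‖b‖ ^ 2 + 4 * ‖b‖ * C with hC'
    have hC'0 : 0 ≤ C' := by positivity
    have ev : ∀ᶠ ρ in nhdsWithin (0 : ℝ) (Set.Ioi 0),
        (-1 / r ^ 2 + ‖b‖ ^ 2 * (r ^ 2 - ρ ^ 2))
          - ‖b‖ ^ 2 * ρ ^ 2 * (1 - ρ ^ 2 / r ^ 2 + ‖b‖ ^ 2 * ρ ^ 2 * (r ^ 2 - ρ ^ 2))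
        - (2 * C' * ρ + C' ^ 2 * ρ ^ 4) ≤ 0 := by
      have c1 : ∀ᶠ ρ in nhdsWithin (0 : ℝ) (Set.Ioi 0), 0 < ρ := self_mem_nhdsWithin
      have c2 : ∀ᶠ ρ in nhdsWithin (0 : ℝ) (Set.Ioi 0), ρ < r :=
        nhdsWithin_le_nhds (gt_mem_nhds hr0)
      have c3 : ∀ᶠ ρ in nhdsWithin (0 : ℝ) (Set.Ioi 0),
          ρ * (2 * (‖b‖ + C + ‖b‖ ^ 2 + ‖b‖ * C)) < 1 := by
        apply nhdsWithin_le_nhds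
        have : Continuous fun ρ : ℝ => ρ * (2 * (‖b‖ + C + ‖b‖ ^ 2 + ‖b‖ * C)) := by fun_prop
        exact this.continuousAt.eventually_lt continuousAt_const (by simp)
      have c4 : ∀ᶠ ρ in nhdsWithin (0 : ℝ) (Set.Ioi 0), 3 * ‖b‖ * ρ ^ 2 < 1 := by
        apply nhdsWithin_le_nhds
        have : Continuous fun ρ : ℝ => 3 * ‖b‖ * ρ ^ 2 := by fun_prop
        exact this.continuousAt.eventually_lt continuousAt_const (by simp)
      filter_upwards [c1, c2, c3, c4] with ρ h1 h2 h3 h4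
      have hcn : ‖-(b * (ρ : ℂ) ^ 2)‖ = ‖b‖ * ρ ^ 2 := by
        rw [norm_neg, norm_mul, norm_pow, Complex.norm_real, Real.norm_of_nonneg h1.le]
      have key := area_ineq e he hinj ρ r (1 / ρ + C' * ρ ^ 2) h1 h2.le hr1 (-(b * (ρ : ℂ) ^ 2))
        (by rw [hcn]; nlinarith [norm_nonneg b, sq_nonneg ρ]) (by positivity) (by
          intro z hz1 hz2
          rw [hexp z]
          apply image_bound b _ z C ρ hC0 h1 hz1 (hz2.trans hr1.le) _ h3.le h4.le
          rw [norm_mul, norm_pow, mul_comm]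
          gcongr
          exact hC z (by simpa using hz2))
      rw [hcn, ← hb] at key
      have k1 : (1 / ρ + C' * ρ ^ 2) ^ 2 = 1 / ρ ^ 2 + (2 * C' * ρ + C' ^ 2 * ρ ^ 4) := by
        field_simp; ring
      have k2 : (1 - (‖b‖ * ρ ^ 2) ^ 2) * (1 / ρ ^ 2 - 1 / r ^ 2 + ‖b‖ ^ 2 * (r ^ 2 - ρ ^ 2))
        = 1 / ρ ^ 2 + ((-1 / r ^ 2 + ‖b‖ ^ 2 * (r ^ 2 - ρ ^ 2))
          - ‖b‖ ^ 2 * ρ ^ 2 * (1 - ρ ^ 2 / r ^ 2 + ‖b‖ ^ 2 * ρ ^ 2 * (r ^ 2 - ρ ^ 2))) := by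
        field_simp; ring
      rw [k1, k2] at key
      linarith
    have hcont : Continuous fun ρ : ℝ => (-1 / r ^ 2 + ‖b‖ ^ 2 * (r ^ 2 - ρ ^ 2))
          - ‖b‖ ^ 2 * ρ ^ 2 * (1 - ρ ^ 2 / r ^ 2 + ‖b‖ ^ 2 * ρ ^ 2 * (r ^ 2 - ρ ^ 2))
        - (2 * C' * ρ + C' ^ 2 * ρ ^ 4) := by fun_prop
    have hlim := le_of_tendsto (hcont.tendsto 0 |>.mono_left nhdsWithin_le_nhds) ev
    have : -1 / r ^ 2 + ‖b‖ ^ 2 * r ^ 2 ≤ 0 := by simpa using hlim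
    rw [neg_div] at this
    linarith
  by_contra hcon
  push Not at hcon
  have hb2 : ∀ᶠ r in nhdsWithin (1 : ℝ) (Set.Iio 1), ‖b‖ ^ 2 * r ^ 4 ≤ 1 := by
    have c1 : ∀ᶠ r in nhdsWithin (1 : ℝ) (Set.Iio 1), r < 1 := self_mem_nhdsWithin
    have c2 : ∀ᶠ r in nhdsWithin (1 : ℝ) (Set.Iio 1), 0 < r :=
      nhdsWithin_le_nhds (lt_mem_nhds one_pos)
    filter_upwards [c1, c2] with r h1 h2
    have := hr r h2 h1
    rw [le_div_iff₀ (by positivity)] at this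
    calc _ = ‖b‖ ^ 2 * r ^ 2 * r ^ 2 := by ring
      _ ≤ 1 := this
  have hcont : Continuous fun r : ℝ => ‖b‖ ^ 2 * r ^ 4 := by fun_prop
  have := le_of_tendsto (hcont.tendsto 1 |>.mono_left nhdsWithin_le_nhds) hb2
  nlinarith

/-- Bieberbach's inequality for the second coefficient. -/
lemma bieberbach (F : ℂ → ℂ) (hF : DifferentiableOn ℂ F (Metric.ball 0 1))
    (hinj : Set.InjOn F (Metric.ball 0 1)) (hF0 : deriv F 0 ≠ 0) :
    ‖deriv (deriv F) 0‖ ≤ 4 * ‖deriv F 0‖ := by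
  have h0 : (0 : ℂ) ∈ Metric.ball (0 : ℂ) 1 := by simp
  have hn : Metric.ball (0 : ℂ) 1 ∈ nhds (0 : ℂ) := Metric.isOpen_ball.mem_nhds h0
  set q := dslope F 0 with hq
  have hqd : DifferentiableOn ℂ q (Metric.ball 0 1) := (Complex.differentiableOn_dslope hn).2 hF
  have hFq : ∀ z, F z = F 0 + z * q z := by
    intro z
    have := sub_smul_dslope F 0 z
    simp only [sub_zero, smul_eq_mul] at this
    rw [hq, this]; ring
  have hq0 : q 0 = deriv F 0 := dslope_same F 0
  have hqne : ∀ z ∈ Metric.ball (0 : ℂ) 1, q z ≠ 0 := by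
    intro z hz hqz
    by_cases hz0 : z = 0
    · rw [hz0, hq0] at hqz; exact hF0 hqz
    · have := hFq z
      rw [hqz, mul_zero, add_zero] at this
      exact hz0 (hinj hz h0 this)
  have hdq : deriv (deriv F) 0 = 2 * deriv q 0 := by
    have hev : deriv F =ᶠ[nhds 0] fun z => q z + z * deriv q z := by
      filter_upwards [hn] with z hz
      have h1 : HasDerivAt q (deriv q z) z :=
        (hqd.differentiableAt (Metric.isOpen_ball.mem_nhds hz)).hasDerivAt
      have h2 := ((hasDerivAt_id z).mul h1).const_add (F 0)
      have h3 : HasDerivAt F (1 * q z + z * deriv q z) z :=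
        h2.congr_of_eventuallyEq (Filter.Eventually.of_forall hFq)
      rw [h3.deriv, one_mul]
    rw [hev.deriv_eq]
    have h1 : HasDerivAt q (deriv q 0) 0 := (hqd.differentiableAt hn).hasDerivAt
    have h2 : HasDerivAt (deriv q) (deriv (deriv q) 0) 0 :=
      ((hqd.deriv Metric.isOpen_ball).differentiableAt hn).hasDerivAt
    have h3 := h1.add ((hasDerivAt_id (0:ℂ)).mul h2)
    have h4 := h3.deriv
    simp only [id, zero_mul, add_zero, one_mul] at h4
    rw [two_mul]
    exact h4
  -- logarithm
  obtain ⟨L, hL0, hL⟩ : ∃ L : ℂ → ℂ, L 0 = 0 ∧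
      ∀ z ∈ Metric.ball (0 : ℂ) 1, HasDerivAt L (deriv q z / q z) z := by
    have hd : DifferentiableOn ℂ (fun z => deriv q z / q z) (Metric.ball 0 1) :=
      (hqd.deriv Metric.isOpen_ball).div hqd hqne
    obtain ⟨L, hL⟩ := hd.isExactOn_ball
    refine ⟨fun z => L z - L 0, by simp, fun z hz => (hL z hz).sub_const _⟩
  have hconst : ∀ z ∈ Metric.ball (0 : ℂ) 1, q z * exp (-L z) = q 0 := by
    have hder : ∀ z ∈ Metric.ball (0 : ℂ) 1, HasDerivAt (fun z => q z * exp (-L z)) 0 z := by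
      intro z hz
      have h1 : HasDerivAt q (deriv q z) z :=
        (hqd.differentiableAt (Metric.isOpen_ball.mem_nhds hz)).hasDerivAt
      have h2 := h1.mul (hL z hz).neg.cexp
      convert! h2 using 1
      field_simp [hqne z hz]
      ring
    intro z hz
    have := (convex_ball (0 : ℂ) 1).is_const_of_fderivWithin_eq_zero (𝕜 := ℂ)
      (f := fun z => q z * exp (-L z))
      (fun z hz => (hder z hz).differentiableAt.differentiableWithinAt) (by
        intro z hz
        rw [fderivWithin_of_isOpen Metric.isOpen_ball hz]
        ext
        simp [(hder z hz).deriv]) hz h0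
    simpa [hL0] using this
  set k : ℂ → ℂ := fun z => exp (-L z / 2) with hk
  have hkd : ∀ z ∈ Metric.ball (0 : ℂ) 1, HasDerivAt k (k z * (-(deriv q z / q z) / 2)) z := by
    intro z hz
    exact ((hL z hz).neg.div_const 2).cexp
  have hk0 : k 0 = 1 := by simp [hk, hL0]
  have hk2 : ∀ z, k z ^ 2 = exp (-L z) := by
    intro z
    simp only [hk]
    rw [← Complex.exp_nat_mul]
    congr 1; push_cast; ring
  have hkD : DifferentiableOn ℂ k (Metric.ball 0 1) :=
    fun z hz => (hkd z hz).differentiableAt.differentiableWithinAt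
  set l := dslope k 0 with hl
  have hld : DifferentiableOn ℂ l (Metric.ball 0 1) := (Complex.differentiableOn_dslope hn).2 hkD
  have hkl : ∀ z, k z = 1 + z * l z := by
    intro z
    have := sub_smul_dslope k 0 z
    simp only [sub_zero, smul_eq_mul] at this
    rw [hl, this, hk0]; ring
  have hl0 : l 0 = -(deriv q 0 / q 0) / 2 := by
    rw [hl, dslope_same, (hkd 0 h0).deriv, hk0, one_mul]
  have hsq : ∀ z ∈ Metric.ball (0 : ℂ) 1, z ^ 2 ∈ Metric.ball (0 : ℂ) 1 := by
    intro z hz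
    simp only [mem_ball_zero_iff, norm_pow] at hz ⊢
    exact pow_lt_one₀ (norm_nonneg _) hz two_ne_zero
  set e : ℂ → ℂ := fun z => z * l (z ^ 2) with he
  have heD : DifferentiableOn ℂ e (Metric.ball 0 1) := by
    apply differentiableOn_id.mul
    exact hld.comp (by fun_prop) hsq
  have hde : deriv e 0 = l 0 := by
    have h1 : DifferentiableAt ℂ (fun z => l (z ^ 2)) 0 :=
      (hld.comp (f := fun z : ℂ => z ^ 2) (by fun_prop) hsq).differentiableAt hn
    have h2 := ((hasDerivAt_id (0:ℂ)).mul h1.hasDerivAt).deriv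
    simp only [id, zero_mul, add_zero, one_mul] at h2
    rw [show (0:ℂ) ^ 2 = 0 by simp] at h2
    exact h2
  have hge : ∀ z : ℂ, z ≠ 0 → z⁻¹ + e z = k (z ^ 2) / z := by
    intro z hz
    rw [hkl, he]
    field_simp
  have hg2 : ∀ z ∈ Metric.ball (0 : ℂ) 1, z ≠ 0 → (z⁻¹ + e z) ^ 2 * (F (z ^ 2) - F 0) = q 0 := by
    intro z hz hz0
    rw [hge z hz0, div_pow, hk2, hFq (z ^ 2), ← hconst _ (hsq z hz)]
    field_simp
    ring
  have hA := area_theorem e heD (by simp [he]) (by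
    intro z hz w hw hzw
    rw [Set.mem_sdiff_singleton] at hz hw
    simp only at hzw
    have e1 := hg2 z hz.1 hz.2
    have e2 := hg2 w hw.1 hw.2
    rw [← hzw] at e2
    have hne : (z⁻¹ + e z) ^ 2 ≠ 0 := by
      intro h
      rw [h, zero_mul, hq0] at e1
      exact hF0 e1.symm
    have e3 : F (z ^ 2) = F (w ^ 2) := by
      have := mul_left_cancel₀ hne (e1.trans e2.symm)
      exact sub_left_injective this
    have e4 : z ^ 2 = w ^ 2 := hinj (hsq z hz.1) (hsq w hw.1) e3
    rw [hge z hz.2, hge w hw.2, e4, div_eq_div_iff hz.2 hw.2] at hzw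
    have : k (w ^ 2) ≠ 0 := by simp only [hk]; exact Complex.exp_ne_zero _
    exact (mul_left_cancel₀ this hzw).symm)
  rw [hde, hl0, norm_div, norm_neg, norm_div, hq0] at hA
  rw [hdq, norm_mul]
  have hpos : 0 < ‖deriv F 0‖ := by simpa using hF0
  simp only [Complex.norm_ofNat] at hA ⊢
  rw [div_le_one (by norm_num), div_le_iff₀ hpos] at hA
  linarith

lemma halfplane_second (φ : ℂ → ℂ)
    (hdiff : DifferentiableOn ℂ φ {z : ℂ | 0 < z.re})
    (hinj : Set.InjOn φ {z : ℂ | 0 < z.re}) (t : ℝ) (ht : 0 < t) (hne : deriv φ t ≠ 0) :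
    ‖(t : ℂ) * deriv (deriv φ) t + deriv φ t‖ ≤ 2 * ‖deriv φ t‖ := by
  have hopen : IsOpen {z : ℂ | 0 < z.re} := isOpen_lt continuous_const Complex.continuous_re
  have ht0 : (t : ℂ) ≠ 0 := by exact_mod_cast ht.ne'
  set ψ : ℂ → ℂ := fun ζ => t * ((1 + ζ) / (1 - ζ)) with hψ
  have hne1 : ∀ ζ ∈ Metric.ball (0 : ℂ) 1, 1 - ζ ≠ 0 := by
    intro ζ hζ h
    have : ζ = 1 := by linear_combination -h
    rw [this] at hζ
    simp at hζ
  have hmaps : ∀ ζ ∈ Metric.ball (0 : ℂ) 1, ψ ζ ∈ {z : ℂ | 0 < z.re} := by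
    intro ζ hζ
    have hns : 0 < Complex.normSq (1 - ζ) := Complex.normSq_pos.2 (hne1 ζ hζ)
    have hz : Complex.normSq ζ < 1 := by
      rw [Complex.normSq_eq_norm_sq]
      exact pow_lt_one₀ (norm_nonneg _) (by simpa using hζ) two_ne_zero
    rw [Complex.normSq_apply] at hz
    change 0 < (ψ ζ).re
    simp only [hψ]
    rw [Complex.re_ofReal_mul, Complex.div_re, ← add_div]
    apply mul_pos ht
    apply div_pos _ hns
    simp
    nlinarith
  have hψd : ∀ ζ ∈ Metric.ball (0 : ℂ) 1, HasDerivAt ψ (2 * t / (1 - ζ) ^ 2) ζ := by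
    intro ζ hζ
    have h1 := ((((hasDerivAt_id ζ).const_add 1).div ((hasDerivAt_id ζ).const_sub 1)
      (hne1 ζ hζ))).const_mul (t : ℂ)
    convert! h1 using 1
    simp only [id]
    have := hne1 ζ hζ
    field_simp
    ring
  have h0 : (0 : ℂ) ∈ Metric.ball (0 : ℂ) 1 := by simp
  have hn : Metric.ball (0 : ℂ) 1 ∈ nhds (0 : ℂ) := Metric.isOpen_ball.mem_nhds h0
  have hψ0 : ψ 0 = t := by simp [hψ]
  set F : ℂ → ℂ := fun ζ => φ (ψ ζ) with hF
  have hFd : ∀ ζ ∈ Metric.ball (0 : ℂ) 1,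
      HasDerivAt F (deriv φ (ψ ζ) * (2 * t / (1 - ζ) ^ 2)) ζ := by
    intro ζ hζ
    exact (hdiff.differentiableAt (hopen.mem_nhds (hmaps ζ hζ))).hasDerivAt.comp ζ (hψd ζ hζ)
  have hF1 : deriv F 0 = deriv φ t * (2 * t) := by
    rw [(hFd 0 h0).deriv, hψ0]; simp
  have hF2 : deriv (deriv F) 0 = deriv (deriv φ) t * (2 * t) ^ 2 + deriv φ t * (4 * t) := by
    have hev : deriv F =ᶠ[nhds 0] fun ζ => deriv φ (ψ ζ) * (2 * t / (1 - ζ) ^ 2) := by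
      filter_upwards [hn] with ζ hζ
      exact (hFd ζ hζ).deriv
    rw [hev.deriv_eq]
    have a1 : HasDerivAt (fun ζ => deriv φ (ψ ζ)) (deriv (deriv φ) (ψ 0) * (2 * t / (1 - 0) ^ 2)) 0 :=
      ((hdiff.deriv hopen).differentiableAt (hopen.mem_nhds (hmaps 0 h0))).hasDerivAt.comp 0
        (hψd 0 h0)
    have a2 : HasDerivAt (fun ζ : ℂ => 2 * (t : ℂ) / (1 - ζ) ^ 2) (4 * (t : ℂ)) 0 := by
      have b1 := (hasDerivAt_const (0 : ℂ) (2 * (t : ℂ))).div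
        (((hasDerivAt_id (0 : ℂ)).const_sub 1).pow 2) (by simp)
      convert! b1 using 1
      simp
      ring
    have a3 := (a1.mul a2).deriv
    rw [hψ0] at a3
    refine Eq.trans a3 ?_
    simp only [hψ0, sub_zero, one_pow, div_one]
    ring
  have hFinj : Set.InjOn F (Metric.ball 0 1) := by
    intro z hz w hw hzw
    have h1 : ψ z = ψ w := hinj (hmaps z hz) (hmaps w hw) hzw
    have h2 := mul_left_cancel₀ ht0 h1
    rw [div_eq_div_iff (hne1 z hz) (hne1 w hw)] at h2
    linear_combination h2 / 2
  have hB := bieberbach F (fun ζ hζ => (hFd ζ hζ).differentiableAt.differentiableWithinAt) hFinj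
    (by rw [hF1]; exact mul_ne_zero hne (mul_ne_zero two_ne_zero ht0))
  rw [hF1, hF2] at hB
  have e1 : deriv (deriv φ) (t : ℂ) * (2 * (t : ℂ)) ^ 2 + deriv φ t * (4 * (t : ℂ))
      = (4 * (t : ℂ)) * ((t : ℂ) * deriv (deriv φ) t + deriv φ t) := by ring
  rw [e1] at hB
  simp only [norm_mul, Complex.norm_ofNat, Complex.norm_real, Real.norm_of_nonneg ht.le] at hB
  have : 4 * t * ‖(t : ℂ) * deriv (deriv φ) t + deriv φ t‖ ≤ 4 * t * (2 * ‖deriv φ t‖) := by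
    linarith
  exact le_of_mul_le_mul_left this (by positivity)

lemma halfplane_growth (φ : ℂ → ℂ)
    (hdiff : DifferentiableOn ℂ φ {z : ℂ | 0 < z.re})
    (hinj : Set.InjOn φ {z : ℂ | 0 < z.re}) (T : ℝ) (hT : 1 ≤ T) :
    ‖deriv φ (T : ℂ)‖ ≤ T * ‖deriv φ 1‖ := by
  have hopen : IsOpen {z : ℂ | 0 < z.re} := isOpen_lt continuous_const Complex.continuous_re
  set p : ℝ → ℂ := fun x => deriv φ (x : ℂ) with hp
  have hpd : ∀ x : ℝ, 0 < x → HasDerivAt p (deriv (deriv φ) (x : ℂ)) x := by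
    intro x hx
    have : HasDerivAt (deriv φ) (deriv (deriv φ) (x : ℂ)) (x : ℂ) :=
      ((hdiff.deriv hopen).differentiableAt (hopen.mem_nhds (by simpa using hx))).hasDerivAt
    exact this.comp_ofReal
  have hud : ∀ x : ℝ, 0 < x → HasDerivAt (fun x => ‖p x‖ ^ 2 / x ^ 2)
      ((2 * inner ℝ (p x) (deriv (deriv φ) (x : ℂ)) * x ^ 2 - ‖p x‖ ^ 2 * (2 * x)) / (x ^ 2) ^ 2) x := by
    intro x hx
    have h1 := (hpd x hx).norm_sq.div (hasDerivAt_pow 2 x) (pow_ne_zero 2 hx.ne')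
    convert! h1 using 1
    simp
  have hneg : ∀ x : ℝ, 0 < x →
      (2 * inner ℝ (p x) (deriv (deriv φ) (x : ℂ)) * x ^ 2 - ‖p x‖ ^ 2 * (2 * x)) / (x ^ 2) ^ 2 ≤ 0 := by
    intro x hx
    apply div_nonpos_of_nonpos_of_nonneg _ (by positivity)
    by_cases hz : p x = 0
    · simp [hz]
    · have h1 := halfplane_second φ hdiff hinj x hx hz
      have h2 := real_inner_le_norm (p x) ((x : ℂ) * deriv (deriv φ) x + deriv φ x)
      have h3 : inner ℝ (p x) ((x : ℂ) * deriv (deriv φ) x + deriv φ x)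
          = x * inner ℝ (p x) (deriv (deriv φ) (x : ℂ)) + ‖p x‖ ^ 2 := by
        rw [inner_add_right, ← Complex.real_smul, real_inner_smul_right]
        congr 1
        exact real_inner_self_eq_norm_sq (p x)
      rw [h3] at h2
      have h4 : ‖p x‖ * ‖(x : ℂ) * deriv (deriv φ) x + deriv φ x‖ ≤ ‖p x‖ * (2 * ‖p x‖) := by
        gcongr
      have h5 : x * inner ℝ (p x) (deriv (deriv φ) (x : ℂ)) ≤ ‖p x‖ ^ 2 := by nlinarith
      nlinarith
  have hanti : AntitoneOn (fun x => ‖p x‖ ^ 2 / x ^ 2) (Set.Ici (1 : ℝ)) := by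
    apply antitoneOn_of_deriv_nonpos (convex_Ici 1)
    · intro x hx
      exact (hud x (lt_of_lt_of_le one_pos hx)).continuousAt.continuousWithinAt
    · intro x hx
      rw [interior_Ici] at hx
      exact (hud x (lt_trans one_pos hx)).differentiableAt.differentiableWithinAt
    · intro x hx
      rw [interior_Ici] at hx
      rw [(hud x (lt_trans one_pos hx)).deriv]
      exact hneg x (lt_trans one_pos hx)
  have h := hanti (Set.mem_Ici.2 le_rfl) (Set.mem_Ici.2 hT) hT
  have hT0 : 0 < T := by linarith
  simp only [one_pow, div_one] at h
  rw [div_le_iff₀ (by positivity)] at h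
  have hp1 : p 1 = deriv φ 1 := by simp [hp]
  rw [hp1] at h
  apply le_of_sq_le_sq _ (by positivity)
  calc ‖deriv φ (T : ℂ)‖ ^ 2 ≤ _ := h
    _ = _ := by ring

/-- Second part of Lemma 5.1 of the paper: if `a₀ = log R + i y`, `y ≥ 0`, and
`|φ(a₀)| = R`, then `R ≤ |φ(1)| + 32 H |φ'(1)| (max(log R, y))²`. -/
theorem boundary_point_estimate (φ : ℂ → ℂ) (H α : ℝ)
    (hH : 0 < H) (hα : 0 < α) (hα1 : α ≤ 1)
    (hdiff : DifferentiableOn ℂ φ {z : ℂ | 0 < z.re})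
    (hinj : Set.InjOn φ {z : ℂ | 0 < z.re})
    (hHol : ∀ T : ℝ, 1 ≤ T → ∀ w₁ ∈ Qsq 1, ∀ w₂ ∈ Qsq 1,
      ‖φ ((T : ℂ) * w₁) - φ ((T : ℂ) * w₂)‖
        ≤ H * T * ‖deriv φ (T : ℂ)‖ * ‖w₁ - w₂‖ ^ α) :
    ∀ R y : ℝ, Real.exp 1 ≤ R → 0 ≤ y →
      ‖φ (((Real.log R : ℝ) : ℂ) + (y : ℂ) * Complex.I)‖ = R →
      R ≤ ‖φ 1‖ + 32 * H * ‖deriv φ 1‖ * (max (Real.log R) y) ^ 2 := by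
  intro R y hR hy hφ
  set M := max (Real.log R) y with hM
  have hlog : 1 ≤ Real.log R := by
    rw [Real.le_log_iff_exp_le (lt_of_lt_of_le (Real.exp_pos 1) hR)]
    exact hR
  have hM1 : 1 ≤ M := hlog.trans (le_max_left _ _)
  have hlM : Real.log R ≤ M := le_max_left _ _
  have hyM : y ≤ M := le_max_right _ _
  have hM0 : 0 < M := by linarith
  have hT : 1 ≤ 2 * M := by linarith
  have hT0 : ((2 * M : ℝ) : ℂ) ≠ 0 := by exact_mod_cast (by positivity : (2 * M : ℝ) ≠ 0)
  set w₁ : ℂ := ⟨Real.log R / (2 * M), y / (2 * M)⟩ with hw₁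
  set w₂ : ℂ := ⟨1 / (2 * M), 0⟩ with hw₂
  have a1 : 0 < Real.log R / (2 * M) := by positivity
  have a2 : Real.log R / (2 * M) ≤ 1 / 2 := by
    rw [div_le_iff₀ (by positivity)]; linarith
  have a3 : 0 ≤ y / (2 * M) := by positivity
  have a4 : y / (2 * M) ≤ 1 / 2 := by
    rw [div_le_iff₀ (by positivity)]; linarith
  have a5 : 0 < 1 / (2 * M) := by positivity
  have a6 : 1 / (2 * M) ≤ 1 / 2 := by
    rw [div_le_iff₀ (by positivity)]; linarith
  have m1 : w₁ ∈ Qsq 1 := by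
    refine ⟨?_, ?_, ?_, ?_⟩ <;> simp only [hw₁] <;> linarith
  have m2 : w₂ ∈ Qsq 1 := by
    refine ⟨?_, ?_, ?_, ?_⟩ <;> simp only [hw₂] <;> linarith
  have e1 : ((2 * M : ℝ) : ℂ) * w₁ = ((Real.log R : ℝ) : ℂ) + (y : ℂ) * Complex.I := by
    apply Complex.ext
    · rw [Complex.re_ofReal_mul]
      simp [hw₁]
      field_simp
    · rw [Complex.im_ofReal_mul]
      simp [hw₁]
      field_simp
  have e2 : ((2 * M : ℝ) : ℂ) * w₂ = 1 := by
    apply Complex.ext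
    · rw [Complex.re_ofReal_mul]
      simp [hw₂]
      field_simp
    · rw [Complex.im_ofReal_mul]
      simp [hw₂]
  have hn : ‖w₁ - w₂‖ ≤ 1 := by
    refine (Complex.norm_le_abs_re_add_abs_im _).trans ?_
    have b1 : |(w₁ - w₂).re| ≤ 1 / 2 := by
      rw [abs_le]
      simp only [Complex.sub_re, hw₁, hw₂]
      constructor <;> linarith
    have b2 : |(w₁ - w₂).im| ≤ 1 / 2 := by
      rw [abs_le]
      simp only [Complex.sub_im, hw₁, hw₂]
      constructor <;> linarith
    linarith
  have hna : ‖w₁ - w₂‖ ^ α ≤ 1 := Real.rpow_le_one (norm_nonneg _) hn hα.le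
  have hmain := hHol (2 * M) hT w₁ m1 w₂ m2
  rw [e1, e2] at hmain
  have hg := halfplane_growth φ hdiff hinj (2 * M) hT
  have h1 : H * (2 * M) * ‖deriv φ ((2 * M : ℝ) : ℂ)‖ * ‖w₁ - w₂‖ ^ α
      ≤ H * (2 * M) * (2 * M * ‖deriv φ 1‖) * 1 := by
    gcongr
  have h2 := norm_sub_norm_le (φ (((Real.log R : ℝ) : ℂ) + (y : ℂ) * Complex.I)) (φ 1)
  rw [hφ] at h2
  have h3 : 0 ≤ H * ‖deriv φ 1‖ * M ^ 2 := by positivity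
  nlinarith
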